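/- Let H be a real Hilbert space, d ≥ 1 an integer, C ⊆ H a nonempty closed convex set with ‖x − y‖ ≤ d for all x, y ∈ C, T : C → C nonexpansive with Fix(T) ≠ ∅, and G : C → C a τ-contraction (0 ≤ τ < 1). Let (λ_n) ⊆ (0,1], h : ℕ → ℕ⁺ with λ_n ≥ 1/h(n) for all n, and χ : ℕ → ℕ with λ_i ≤ 1/(n+1) for all n ∈ ℕ and all i ≥ χ(n). Let v : ℕ → C satisfy v_n = (1−λ_n)·T(v_n) + λ_n·G(T(v_n)) for all n. Then for every ε ∈ (0,1] and every g : ℕ → ℕ there exists n ≤ Ξ(ε/2, m ↦ m + g(m), χ, h, d, τ) such that ‖v_i − v_j‖ ≤ ε for all i, j ∈ [n; n + g(n)]; i.e. Ξ(ε/2, m ↦ m + g(m), χ, h, d, τ) is a rate of metastability for the resolvent sequence (v_n). -/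

import Mathlib

open scoped RealInnerProductSpace

/-- `fM f n = max {f i : 1 ≤ i ≤ n}`. -/
def fM (f : ℕ → ℕ) (n : ℕ) : ℕ := (Finset.Icc 1 n).sup f

/-- `ftilde d f n = max {fᴹ(16·d·n²), 16·d·n²}`. -/
def ftilde (d : ℕ) (f : ℕ → ℕ) (n : ℕ) : ℕ := max (fM f (16 * d * n ^ 2)) (16 * d * n ^ 2)

/-- `fIt d nε f i = f̃^(nε^i)`, the `nε^i`-fold iterate of `f̃`. -/
def fIt (d nε : ℕ) (f : ℕ → ℕ) (i : ℕ) (k : ℕ) : ℕ := (ftilde d f)^[nε ^ i] k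

/-- `ftildeI d nε f i n = max {fᵢᴹ(16·d·n²), 16·d·n²}`. -/
def ftildeI (d nε : ℕ) (f : ℕ → ℕ) (i : ℕ) (n : ℕ) : ℕ :=
  max (fM (fIt d nε f i) (16 * d * n ^ 2)) (16 * d * n ^ 2)

/-- The recursively defined sequence `k₀ := f̃₀^(nε)(1)`, `k_{i+1} := f̃ᵢ^(nε)(kᵢ)`. -/
def kSeq (d nε : ℕ) (f : ℕ → ℕ) : ℕ → ℕ
  | 0 => (ftildeI d nε f 0)^[nε] 1
  | (i + 1) => (ftildeI d nε f i)^[nε] (kSeq d nε f i)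

/-- `Kdef d τ ε̃ f = k_{i₀}` where `n_ε̃ := ⌈8d⁴/ε̃⁴⌉` and `i₀` is the least `i`
with `τ^(i+1) ≤ ε̃/(6d²)`. -/
noncomputable def Kdef (d : ℕ) (τ εt : ℝ) (f : ℕ → ℕ) : ℕ :=
  kSeq d ⌈8 * (d : ℝ) ^ 4 / εt ^ 4⌉₊ f
    (sInf {i : ℕ | τ ^ (i + 1) ≤ εt / (6 * (d : ℝ) ^ 2)})

/-- `fM0 F n = max {F i : 0 ≤ i ≤ n}` (for functions on ℕ). -/
def fM0 (F : ℕ → ℕ) (n : ℕ) : ℕ := (Finset.range (n + 1)).sup F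

/-- `gTil g n = max {n, g n}`. -/
def gTil (g : ℕ → ℕ) (n : ℕ) : ℕ := max n (g n)

/-- The counterfunction majorant `f(n) := ⌈6d·hᴹ(g̃ᴹ(χ(d·n)))/((1−τ)(ε/2)²)⌉`. -/
noncomputable def fXi (ε τ : ℝ) (g χ h : ℕ → ℕ) (d : ℕ) (n : ℕ) : ℕ :=
  ⌈6 * (d : ℝ) * (fM0 h (fM0 (gTil g) (χ (d * n))) : ℝ) / ((1 - τ) * (ε / 2) ^ 2)⌉₊

/-- The quantity `K = k_{i₀}` occurring in the definition of `Ξ(ε, g, χ, h, d, τ)`,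
with `ε₁ := (1−τ)(ε/2)²/2`, `ε_d := ε₁²/(2d²)` and `ε̃ := ((1−τ)²/(6+8d))·ε_d`. -/
noncomputable def KXi (ε : ℝ) (g χ h : ℕ → ℕ) (d : ℕ) (τ : ℝ) : ℕ :=
  Kdef d τ ((1 - τ) ^ 2 / (6 + 8 * (d : ℝ)) *
    (((1 - τ) * (ε / 2) ^ 2 / 2) ^ 2 / (2 * (d : ℝ) ^ 2))) (fXi ε τ g χ h d)

/-- The rate of metastability `Ξ(ε, g, χ, h, d, τ) := χ(d·k_{i₀})`. -/
noncomputable def XiDef (ε : ℝ) (g χ h : ℕ → ℕ) (d : ℕ) (τ : ℝ) : ℕ :=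
  χ (d * KXi ε g χ h d τ)

/-!
For a fixed anchor `u`, the resolvent points `z_l = (1 - l) T z_l + l u` move away from `u` as `l`
decreases, and `‖z_m - z_l‖² ≤ ‖z_m - u‖² - ‖z_l - u‖²` for `m ≤ l`. As `‖z_l - u‖² ≤ D²`, among any
`M` consecutive blocks of parameters there is one on which `z` varies by at most `D / √M`.

A point of the viscosity curve `v = (1 - l) T v + l Φ v` is a resolvent point anchored at `Φ v`.
If all `v` with parameters in a block are within `ρ` of some `c`, they are within `τ ρ` of the
resolvent curve anchored at `Φ c`, and so, on one of `M` subblocks, within `τ ρ + D / √M` of a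
single point. Starting from `M ^ m` blocks and repeating this `m` times leaves one block on which
`v` stays within `τ ^ m D + D / ((1 - τ) √M)` of a centre. The completion supplies the resolvent
points when `C` is not complete.

With blocks delimited by the reciprocals of the iterates `f̃^(j)(1)`, the functions `χ` and `h`
translate a block of parameters into a window of indices, and `k_{i₀}` majorizes the relevant
iterates.
-/

open Set Filter Topology UniformSpace
open scoped NNReal

section Extension

lemma exists_lipschitzOnWith_closure_extension {X Y : Type*} [PseudoMetricSpace X] [MetricSpace Y]
    [CompleteSpace Y] {K : ℝ≥0} {f : X → Y} {s : Set X} {t : Set Y}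
    (hf : LipschitzOnWith K f s) (hst : MapsTo f s t) :
    ∃ f' : X → Y, EqOn f' f s ∧ MapsTo f' (closure s) (closure t) ∧
      LipschitzOnWith K f' (closure s) := by
  have hlim : ∀ x ∈ closure s, ∃ y, Tendsto f (𝓝[s] x) (𝓝 y) := fun x hx ↦ by
    have := mem_closure_iff_nhdsWithin_neBot.1 hx
    exact cauchy_map_iff_exists_tendsto.1 <|
      (cauchy_nhds.mono nhdsWithin_le_nhds).map_of_le hf.uniformContinuousOn inf_le_right
  have hcont : ContinuousOn (extendFrom s f) (closure s) := continuousOn_extendFrom subset_rfl hlim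
  have heq : EqOn (extendFrom s f) f s := extendFrom_extends hf.continuousOn
  have hlip : LipschitzOnWith K (extendFrom s f) s := fun x hx y hy ↦ by
    simpa only [heq hx, heq hy] using hf hx hy
  exact ⟨extendFrom s f, heq, (hst.congr heq.symm).closure_of_continuousOn hcont,
    hlip.closure hcont⟩

lemma exists_lipschitzOnWith_completion_extension {X : Type*} [MetricSpace X] {K : ℝ≥0}
    {f : X → X} {s : Set X} (hf : LipschitzOnWith K f s) (hs : MapsTo f s s) :
    ∃ f' : Completion X → Completion X, (∀ x ∈ s, f' x = f x) ∧
      MapsTo f' (closure ((↑) '' s)) (closure ((↑) '' s)) ∧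
      LipschitzOnWith K f' (closure ((↑) '' s)) := by
  let F : Completion X → Completion X := Function.extend (↑) (fun x ↦ (f x : Completion X)) id
  have hF (x : X) : F x = f x := (Completion.coe_injective X).extend_apply _ _ x
  have hlip : LipschitzOnWith K F ((↑) '' s) := by
    rintro _ ⟨x, hx, rfl⟩ _ ⟨y, hy, rfl⟩
    simpa only [hF, Completion.edist_eq] using hf hx hy
  have hmaps : MapsTo F ((↑) '' s) ((↑) '' s) := by
    rintro _ ⟨x, hx, rfl⟩
    exact ⟨f x, hs hx, (hF x).symm⟩
  obtain ⟨f', heq, hmaps', hlip'⟩ := exists_lipschitzOnWith_closure_extension hlip hmaps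
  exact ⟨f', fun x hx ↦ (heq (mem_image_of_mem _ hx)).trans (hF x), hmaps', hlip'⟩

end Extension

section Resolvent

variable {H : Type*} [NormedAddCommGroup H] [InnerProductSpace ℝ H]

/-- `z` is the point of the resolvent curve `l ↦ (1 - l) T z + l u` of `T` anchored at `u` with
parameter `l`. It is encoded as a relation, since such a `z` need not exist without completeness. -/
def IsResolventPoint (T : H → H) (l : ℝ) (u z : H) : Prop :=
  z = (1 - l) • T z + l • u

namespace IsResolventPoint

variable {T : H → H} {l m : ℝ} {u u' z w : H}

lemma sub_anchor_eq (hz : IsResolventPoint T l u z) : z - u = (1 - l) • (T z - u) := by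
  nth_rewrite 1 [hz]
  module

lemma inner_sub_anchor_sub_nonpos (hz : IsResolventPoint T l u z)
    (hw : IsResolventPoint T m u w) (hm : 0 < m) (hml : m ≤ l) (hl : l ≤ 1)
    (hT : ‖T z - T w‖ ≤ ‖z - w‖) : ⟪z - u, z - w⟫ ≤ 0 := by
  have hdiff : ((1 - l) * (1 - m)) • (T z - T w) = (l - m) • (z - u) + (1 - l) • (z - w) :=
    calc ((1 - l) * (1 - m)) • (T z - T w)
        = (1 - m) • ((1 - l) • (T z - u)) - (1 - l) • ((1 - m) • (T w - u)) := by module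
      _ = (1 - m) • (z - u) - (1 - l) • (w - u) := by rw [← hz.sub_anchor_eq, ← hw.sub_anchor_eq]
      _ = (l - m) • (z - u) + (1 - l) • (z - w) := by module
  have hTinner : ⟪T z - T w, z - w⟫ ≤ ‖z - w‖ ^ 2 := by
    rw [sq]
    exact (real_inner_le_norm _ _).trans (by gcongr)
  have hsum : (l - m) * ⟪z - u, z - w⟫ + m * (1 - l) * ‖z - w‖ ^ 2 ≤ 0 := by
    have h := congrArg (⟪·, z - w⟫) hdiff
    simp only [inner_add_left, real_inner_smul_left, real_inner_self_eq_norm_sq] at h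
    have := mul_le_mul_of_nonneg_left hTinner
      (mul_nonneg (sub_nonneg.2 hl) (sub_nonneg.2 (hml.trans hl)))
    linarith
  by_contra! hpos
  rcases hl.eq_or_lt with rfl | hl1
  · simp [hz.sub_anchor_eq] at hpos
  · have hzw : z - w ≠ 0 := fun h ↦ by simp [h] at hpos
    have h1 : 0 ≤ (l - m) * ⟪z - u, z - w⟫ := mul_nonneg (sub_nonneg.2 hml) hpos.le
    have h2 : 0 < m * (1 - l) * ‖z - w‖ ^ 2 := by
      have := sub_pos.2 hl1
      positivity
    linarith

lemma norm_sub_sq_le_norm_sub_anchor_sq_sub (hz : IsResolventPoint T l u z)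
    (hw : IsResolventPoint T m u w) (hm : 0 < m) (hml : m ≤ l) (hl : l ≤ 1)
    (hT : ‖T z - T w‖ ≤ ‖z - w‖) : ‖w - z‖ ^ 2 ≤ ‖w - u‖ ^ 2 - ‖z - u‖ ^ 2 := by
  have hobtuse := hz.inner_sub_anchor_sub_nonpos hw hm hml hl hT
  have hexpand : ‖w - u‖ ^ 2 = ‖z - u‖ ^ 2 - 2 * ⟪z - u, z - w⟫ + ‖z - w‖ ^ 2 := by
    rw [← norm_sub_sq_real]
    congr 2
    abel
  rw [norm_sub_rev w z]
  linarith

lemma norm_sub_le_norm_anchor_sub (hz : IsResolventPoint T l u z)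
    (hw : IsResolventPoint T l u' w) (hl0 : 0 < l) (hl1 : l ≤ 1) (hT : ‖T z - T w‖ ≤ ‖z - w‖) :
    ‖z - w‖ ≤ ‖u - u'‖ := by
  have hdiff : z - w = (1 - l) • (T z - T w) + l • (u - u') := by
    nth_rewrite 1 [hz, hw]
    module
  have hnorm : ‖z - w‖ ≤ (1 - l) * ‖z - w‖ + l * ‖u - u'‖ := by
    have hl := sub_nonneg.2 hl1
    calc ‖z - w‖ ≤ ‖(1 - l) • (T z - T w)‖ + ‖l • (u - u')‖ := hdiff ▸ norm_add_le _ _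
      _ = (1 - l) * ‖T z - T w‖ + l * ‖u - u'‖ := by
        rw [norm_smul_of_nonneg hl, norm_smul_of_nonneg hl0.le]
      _ ≤ (1 - l) * ‖z - w‖ + l * ‖u - u'‖ := by gcongr
  exact le_of_mul_le_mul_left (by linarith) hl0

end IsResolventPoint

variable {ι : Type*} {C : Set H} {T Φ : H → H} {D : ℝ} {τ : ℝ≥0} {M : ℕ} {b : ℕ → ℝ}
  {lam : ι → ℝ} {v : ι → H}

lemma exists_isResolventPoint (hC : IsComplete C) (hconv : Convex ℝ C) (hT : LipschitzOnWith 1 T C)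
    (hTm : MapsTo T C C) {u : H} (hu : u ∈ C) {l : ℝ} (hl : l ∈ Ioc 0 1) :
    ∃ z ∈ C, IsResolventPoint T l u z := by
  have hl' : 0 ≤ 1 - l := sub_nonneg.2 hl.2
  have hmaps : MapsTo (fun z ↦ (1 - l) • T z + l • u) C C := fun z hz ↦
    hconv (hTm hz) hu hl' hl.1.le (by ring)
  have hcontr : ContractingWith (1 - l).toNNReal (hmaps.restrict _ C C) := by
    refine ⟨by simpa using hl.1, LipschitzWith.of_dist_le' fun x y ↦ ?_⟩
    have := hT.dist_le_mul x x.2 y y.2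
    simp only [Subtype.dist_eq, MapsTo.val_restrict_apply, dist_add_right, dist_smul₀,
      Real.norm_of_nonneg hl']
    gcongr
    simpa using this
  obtain ⟨z, hz, hfix, -⟩ := hcontr.exists_fixedPoint' hC hmaps hu (edist_ne_top _ _)
  exact ⟨z, hz, hfix.symm⟩

lemma exists_succ_sub_le_div {a : ℕ → ℝ} (hM : 0 < M) (ha : a M - a 0 ≤ D) :
    ∃ p < M, a (p + 1) - a p ≤ D / M := by
  have hsum : ∑ p ∈ Finset.range M, (a (p + 1) - a p) ≤ ∑ _p ∈ Finset.range M, D / M := by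
    rw [Finset.sum_range_sub, Finset.sum_const, Finset.card_range, nsmul_eq_mul,
      mul_div_cancel₀ D (by positivity)]
    exact ha
  simpa using Finset.exists_le_of_sum_le (by simpa using hM.ne') hsum

lemma exists_norm_sub_resolventPoint_le (hC : IsComplete C) (hconv : Convex ℝ C)
    (hD : ∀ x ∈ C, ∀ y ∈ C, ‖x - y‖ ≤ D) (hT : LipschitzOnWith 1 T C) (hTm : MapsTo T C C)
    {u : H} (hu : u ∈ C) (hM : 0 < M) (hb : ∀ j, b j ∈ Ioc 0 1) :
    ∃ p < M, ∃ w ∈ C, ∀ l ∈ Icc (b (p + 1)) (b p), ∀ z ∈ C, IsResolventPoint T l u z →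
      ‖z - w‖ ≤ D / √M := by
  have hD0 : 0 ≤ D := (norm_nonneg _).trans (hD u hu u hu)
  have hT' : ∀ x ∈ C, ∀ y ∈ C, ‖T x - T y‖ ≤ ‖x - y‖ := fun x hx y hy ↦ by
    simpa using hT.norm_sub_le hx hy
  choose w hwC hw using fun j ↦ exists_isResolventPoint hC hconv hT hTm hu (hb j)
  have htotal : ‖w M - u‖ ^ 2 - ‖w 0 - u‖ ^ 2 ≤ D ^ 2 :=
    (sub_le_self _ (sq_nonneg _)).trans (by gcongr; exact hD _ (hwC M) u hu)
  obtain ⟨p, hp, hgap⟩ := exists_succ_sub_le_div (a := fun j ↦ ‖w j - u‖ ^ 2) hM htotal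
  refine ⟨p, hp, w p, hwC p, fun l hl z hzC hz ↦ ?_⟩
  have hl0 : 0 < l := (hb (p + 1)).1.trans_le hl.1
  have hupper := (hw p).norm_sub_sq_le_norm_sub_anchor_sq_sub hz hl0 hl.2 (hb p).2
    (hT' _ (hwC p) _ hzC)
  have hlower := hz.norm_sub_sq_le_norm_sub_anchor_sq_sub (hw (p + 1)) (hb (p + 1)).1 hl.1
    (hl.2.trans (hb p).2) (hT' _ hzC _ (hwC (p + 1)))
  refine le_of_sq_le_sq ?_ (by positivity)
  rw [div_pow, Real.sq_sqrt (Nat.cast_nonneg M)]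
  linarith [sq_nonneg ‖w (p + 1) - z‖]

lemma exists_norm_sub_center_le (hC : IsComplete C) (hne : C.Nonempty) (hconv : Convex ℝ C)
    (hD : ∀ x ∈ C, ∀ y ∈ C, ‖x - y‖ ≤ D) (hT : LipschitzOnWith 1 T C) (hTm : MapsTo T C C)
    (hΦ : LipschitzOnWith τ Φ C) (hΦm : MapsTo Φ C C) (hτ : τ < 1)
    (hlam : ∀ i, lam i ∈ Ioc 0 1) (hvC : ∀ i, v i ∈ C)
    (hv : ∀ i, IsResolventPoint T (lam i) (Φ (v i)) (v i)) (hM : 0 < M)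
    (hb : ∀ j, b j ∈ Ioc 0 1) (hanti : Antitone b) (m : ℕ) :
    ∃ s < M ^ m, ∃ c ∈ C, ∀ i, lam i ∈ Icc (b (s + 1)) (b s) →
      ‖v i - c‖ ≤ τ ^ m * D + D / √M / (1 - τ) := by
  have hτ' : (0 : ℝ) < 1 - τ := sub_pos.2 (by exact_mod_cast hτ)
  obtain ⟨x₀, hx₀⟩ := hne
  have hD0 : 0 ≤ D := (norm_nonneg _).trans (hD x₀ hx₀ x₀ hx₀)
  induction m generalizing b with
  | zero =>
    refine ⟨0, by simp, x₀, hx₀, fun i _ ↦ ?_⟩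
    rw [pow_zero, one_mul]
    exact (hD _ (hvC i) x₀ hx₀).trans (le_add_of_nonneg_right (by positivity))
  | succ m ih =>
    obtain ⟨s, hs, c, hc, hcenter⟩ := ih (b := fun j ↦ b (M * j)) (fun j ↦ hb _)
      (hanti.comp_monotone fun _ _ h ↦ Nat.mul_le_mul_left M h)
    obtain ⟨p, hp, w, hw, hblock⟩ := exists_norm_sub_resolventPoint_le hC hconv hD hT hTm (hΦm hc)
      hM (b := fun j ↦ b (M * s + j)) fun j ↦ hb _
    refine ⟨M * s + p, ?_, w, hw, fun i hi ↦ ?_⟩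
    · calc M * s + p < M * (s + 1) := by rw [mul_add_one]; lia
        _ ≤ M * M ^ m := Nat.mul_le_mul_left M hs
        _ = M ^ (m + 1) := (pow_succ' M m).symm
    · have hvc : ‖v i - c‖ ≤ τ ^ m * D + D / √M / (1 - τ) :=
        hcenter i <| Icc_subset_Icc (hanti (by rw [mul_add_one]; lia)) (hanti (by lia)) hi
      obtain ⟨z, hzC, hz⟩ := exists_isResolventPoint hC hconv hT hTm (hΦm hc) (hlam i)
      have hvz : ‖v i - z‖ ≤ τ * ‖v i - c‖ :=
        ((hv i).norm_sub_le_norm_anchor_sub hz (hlam i).1 (hlam i).2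
          (by simpa using hT.norm_sub_le (hvC i) hzC)).trans (hΦ.norm_sub_le (hvC i) hc)
      calc ‖v i - w‖ ≤ ‖v i - z‖ + ‖z - w‖ := norm_sub_le_norm_sub_add_norm_sub _ _ _
        _ ≤ τ * (τ ^ m * D + D / √M / (1 - τ)) + D / √M :=
          add_le_add (hvz.trans (by gcongr)) (hblock _ hi z hzC hz)
        _ = τ ^ (m + 1) * D + D / √M / (1 - τ) := by field_simp; ring

lemma exists_block_norm_sub_le (hne : C.Nonempty) (hconv : Convex ℝ C)
    (hD : ∀ x ∈ C, ∀ y ∈ C, ‖x - y‖ ≤ D) (hT : LipschitzOnWith 1 T C) (hTm : MapsTo T C C)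
    (hΦ : LipschitzOnWith τ Φ C) (hΦm : MapsTo Φ C C) (hτ : τ < 1)
    (hlam : ∀ i, lam i ∈ Ioc 0 1) (hvC : ∀ i, v i ∈ C)
    (hv : ∀ i, IsResolventPoint T (lam i) (Φ (v i)) (v i)) (hM : 0 < M)
    (hb : ∀ j, b j ∈ Ioc 0 1) (hanti : Antitone b) (m : ℕ) :
    ∃ s < M ^ m, ∀ i j, lam i ∈ Icc (b (s + 1)) (b s) → lam j ∈ Icc (b (s + 1)) (b s) →
      ‖v i - v j‖ ≤ 2 * (τ ^ m * D + D / √M / (1 - τ)) := by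
  obtain ⟨T', hT'eq, hT'm, hT'⟩ := exists_lipschitzOnWith_completion_extension hT hTm
  obtain ⟨Φ', hΦ'eq, hΦ'm, hΦ'⟩ := exists_lipschitzOnWith_completion_extension hΦ hΦm
  have hconv' : Convex ℝ (closure (((↑) : H → Completion H) '' C)) :=
    (hconv.linear_image (Completion.toComplₗᵢ (𝕜 := ℝ) (E := H)).toLinearMap).closure
  have hD' : ∀ x ∈ closure (((↑) : H → Completion H) '' C),
      ∀ y ∈ closure (((↑) : H → Completion H) '' C), ‖x - y‖ ≤ D := fun x hx y hy ↦
    isClosed_Iic.closure_subset <|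
      map_mem_closure₂ (f := fun x y ↦ ‖x - y‖) (by fun_prop) hx hy <| by
        rintro _ ⟨x, hx, rfl⟩ _ ⟨y, hy, rfl⟩
        rw [← Completion.coe_sub, Completion.norm_coe]
        exact hD x hx y hy
  have hv' (i : ι) : IsResolventPoint T' (lam i) (Φ' (v i)) (v i) := by
    rw [IsResolventPoint, hT'eq _ (hvC i), hΦ'eq _ (hvC i)]
    exact_mod_cast congrArg ((↑) : H → Completion H) (hv i)
  obtain ⟨s, hs, c, -, hc⟩ := exists_norm_sub_center_le isClosed_closure.isComplete
    (hne.image _).closure hconv' hD' hT' hT'm hΦ' hΦ'm hτ hlam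
    (fun i ↦ subset_closure (mem_image_of_mem _ (hvC i))) hv' hM hb hanti m
  refine ⟨s, hs, fun i j hi hj ↦ ?_⟩
  calc ‖v i - v j‖ = ‖(v i : Completion H) - v j‖ := by
        rw [← Completion.coe_sub, Completion.norm_coe]
    _ ≤ ‖v i - c‖ + ‖v j - c‖ := norm_sub_rev c (v j) ▸ norm_sub_le_norm_sub_add_norm_sub _ c _
    _ ≤ 2 * (τ ^ m * D + D / √M / (1 - τ)) := by linarith [hc i hi, hc j hj]

end Resolvent

section Majorants

lemma le_fM0 (F : ℕ → ℕ) {m n : ℕ} (hmn : m ≤ n) : F m ≤ fM0 F n :=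
  Finset.le_sup (Finset.mem_range_succ_iff.2 hmn)

variable {d : ℕ}

lemma le_sixteen_mul_mul_sq (hd : 0 < d) (n : ℕ) : n ≤ 16 * d * n ^ 2 :=
  (Nat.le_self_pow two_ne_zero n).trans (Nat.le_mul_of_pos_left _ (by positivity))

lemma le_ftilde (hd : 0 < d) (f : ℕ → ℕ) (n : ℕ) : n ≤ ftilde d f n :=
  (le_sixteen_mul_mul_sq hd n).trans (le_max_right _ _)

lemma apply_le_ftilde (hd : 0 < d) (f : ℕ → ℕ) {n : ℕ} (hn : 1 ≤ n) : f n ≤ ftilde d f n :=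
  (Finset.le_sup (Finset.mem_Icc.2 ⟨hn, le_sixteen_mul_mul_sq hd n⟩)).trans (le_max_left _ _)

lemma ftilde_mono (d : ℕ) (f : ℕ → ℕ) : Monotone (ftilde d f) := fun a b hab ↦ by
  have h : 16 * d * a ^ 2 ≤ 16 * d * b ^ 2 := by gcongr
  exact max_le_max (Finset.sup_mono (Finset.Icc_subset_Icc_right h)) h

lemma le_iterate_ftilde (hd : 0 < d) (f : ℕ → ℕ) (j n : ℕ) : n ≤ (ftilde d f)^[j] n :=
  Function.id_le_iterate_of_id_le (le_ftilde hd f) j n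

lemma iterate_ftilde_mono (hd : 0 < d) (f : ℕ → ℕ) (n : ℕ) :
    Monotone fun j ↦ (ftilde d f)^[j] n := fun _ _ hij ↦
  Function.monotone_iterate_of_id_le (le_ftilde hd f) hij n

lemma ftildeI_eq_ftilde_fIt (d N : ℕ) (f : ℕ → ℕ) (i : ℕ) :
    ftildeI d N f i = ftilde d (fIt d N f i) := rfl

lemma iterate_ftilde_le_iterate_ftildeI (hd : 0 < d) (N : ℕ) (f : ℕ → ℕ) (i m : ℕ) {k : ℕ}
    (hk : 1 ≤ k) : (ftilde d f)^[N ^ i * m] k ≤ (ftildeI d N f i)^[m] k := by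
  rw [ftildeI_eq_ftilde_fIt]
  induction m generalizing k with
  | zero => simp
  | succ m ih =>
    calc (ftilde d f)^[N ^ i * (m + 1)] k
        = (ftilde d f)^[N ^ i * m] (fIt d N f i k) := by
          rw [Nat.mul_succ, Function.iterate_add_apply, fIt]
      _ ≤ (ftilde d f)^[N ^ i * m] (ftilde d (fIt d N f i) k) :=
          (ftilde_mono d f).iterate _ (apply_le_ftilde hd _ hk)
      _ ≤ (ftilde d (fIt d N f i))^[m + 1] k := ih (hk.trans (le_ftilde hd _ k))

lemma one_le_kSeq (hd : 0 < d) (N : ℕ) (f : ℕ → ℕ) (i : ℕ) : 1 ≤ kSeq d N f i := by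
  induction i with
  | zero => exact le_iterate_ftilde hd (fIt d N f 0) N 1
  | succ i ih => exact ih.trans (le_iterate_ftilde hd (fIt d N f i) N _)

-- `k₀` already iterates `f̃` exactly `N` times, hence the exponent `max i 1`.
lemma iterate_ftilde_one_le_kSeq (hd : 0 < d) (N : ℕ) (f : ℕ → ℕ) (i : ℕ) :
    (ftilde d f)^[N ^ max i 1] 1 ≤ kSeq d N f i := by
  cases i with
  | zero => simpa [kSeq] using iterate_ftilde_le_iterate_ftildeI hd N f 0 N le_rfl
  | succ i =>
    have hk := one_le_kSeq hd N f i
    rw [max_eq_left (Nat.le_add_left 1 i), pow_succ]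
    exact ((ftilde_mono d f).iterate _ hk).trans (iterate_ftilde_le_iterate_ftildeI hd N f i N hk)

lemma one_div_iterate_ftilde_mem_Ioc (hd : 0 < d) (f : ℕ → ℕ) (j : ℕ) :
    1 / ((ftilde d f)^[j] 1 : ℝ) ∈ Ioc 0 1 := by
  have h : (1 : ℝ) ≤ (ftilde d f)^[j] 1 := by exact_mod_cast le_iterate_ftilde hd f j 1
  exact ⟨by positivity, div_le_one_of_le₀ h (by positivity)⟩

lemma antitone_one_div_iterate_ftilde (hd : 0 < d) (f : ℕ → ℕ) :
    Antitone fun j ↦ 1 / ((ftilde d f)^[j] 1 : ℝ) := fun i j hij ↦ by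
  have hpos : (0 : ℝ) < (ftilde d f)^[i] 1 := by exact_mod_cast le_iterate_ftilde hd f i 1
  have hle : ((ftilde d f)^[i] 1 : ℝ) ≤ (ftilde d f)^[j] 1 := by
    exact_mod_cast iterate_ftilde_mono hd f 1 hij
  exact one_div_le_one_div_of_le hpos hle

end Majorants

section Parameters

/-- The accuracy `ε̃ = ((1-τ)²/(6+8d))·ε_d` entering `Ξ`, with `ε_d = ε₁²/(2d²)` and
`ε₁ = (1-τ)(ε/2)²/2` substituted. -/
noncomputable def epsTilde (ε : ℝ) (d : ℕ) (τ : ℝ) : ℝ :=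
  (1 - τ) ^ 2 / (6 + 8 * (d : ℝ)) * (((1 - τ) * (ε / 2) ^ 2 / 2) ^ 2 / (2 * (d : ℝ) ^ 2))

variable {ε τ : ℝ} {d : ℕ}

lemma epsTilde_pos (hε : 0 < ε) (hd : 0 < d) (hτ : τ < 1) : 0 < epsTilde ε d τ := by
  have := sub_pos.2 hτ
  unfold epsTilde
  positivity

lemma epsTilde_le (hε : ε ∈ Ioc 0 1) (hd : 0 < d) (hτ : τ ∈ Ico 0 1) :
    epsTilde ε d τ ≤ (1 - τ) * ε ^ 2 / 4 := by
  obtain ⟨hε0, hε1⟩ := hε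
  have hd' : (1 : ℝ) ≤ d := by exact_mod_cast hd
  have hσ0 : 0 ≤ 1 - τ := sub_nonneg.2 hτ.2.le
  have hσ1 : 1 - τ ≤ 1 := sub_le_self 1 hτ.1
  have hfactor : (1 - τ) ^ 2 / (6 + 8 * (d : ℝ)) ≤ 1 - τ :=
    (div_le_self (sq_nonneg _) (by linarith)).trans (pow_le_of_le_one hσ0 hσ1 two_ne_zero)
  have hε₁ : (1 - τ) * (ε / 2) ^ 2 / 2 ≤ ε / 2 :=
    calc (1 - τ) * (ε / 2) ^ 2 / 2 ≤ 1 * (ε / 2) ^ 2 / 2 := by gcongr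
      _ ≤ ε / 2 := by nlinarith
  have hε_d : ((1 - τ) * (ε / 2) ^ 2 / 2) ^ 2 / (2 * (d : ℝ) ^ 2) ≤ ε ^ 2 / 4 :=
    calc ((1 - τ) * (ε / 2) ^ 2 / 2) ^ 2 / (2 * (d : ℝ) ^ 2)
        ≤ ((1 - τ) * (ε / 2) ^ 2 / 2) ^ 2 := div_le_self (sq_nonneg _) (by nlinarith)
      _ ≤ (ε / 2) ^ 2 := by gcongr
      _ = ε ^ 2 / 4 := by ring
  calc epsTilde ε d τ ≤ (1 - τ) * (ε ^ 2 / 4) := by unfold epsTilde; gcongr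
    _ = (1 - τ) * ε ^ 2 / 4 := by ring

lemma pow_sInf_succ_le {a : ℝ} (ha : 0 < a) (hτ : τ ∈ Ico 0 1) :
    τ ^ (sInf {i : ℕ | τ ^ (i + 1) ≤ a} + 1) ≤ a := by
  obtain ⟨k, hk⟩ := exists_pow_lt_of_lt_one ha hτ.2
  exact Nat.sInf_mem (s := {i : ℕ | τ ^ (i + 1) ≤ a})
    ⟨k, (pow_le_pow_of_le_one hτ.1 hτ.2.le k.le_succ).trans hk.le⟩

lemma pow_max_one_mul_le (hε : ε ∈ Ioc 0 1) (hd : 0 < d) (hτ : τ ∈ Ico 0 1) {i : ℕ}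
    (hi : τ ^ (i + 1) ≤ epsTilde ε d τ / (6 * (d : ℝ) ^ 2)) : τ ^ max i 1 * d ≤ ε / 4 := by
  obtain ⟨hτ0, hτ1⟩ := hτ
  have hεt : epsTilde ε d τ ≤ ε ^ 2 / 4 :=
    (epsTilde_le hε hd ⟨hτ0, hτ1⟩).trans (by nlinarith [sq_nonneg ε])
  -- The definition of `i₀` controls the exponent `i + 1`, which is at most `2 * max i 1`.
  refine le_of_sq_le_sq ?_ (by linarith [hε.1])
  calc (τ ^ max i 1 * d) ^ 2 = τ ^ (max i 1 * 2) * (d : ℝ) ^ 2 := by rw [mul_pow, pow_mul]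
    _ ≤ τ ^ (i + 1) * (d : ℝ) ^ 2 := by
      gcongr ?_ * _
      exact pow_le_pow_of_le_one hτ0 hτ1.le (by lia)
    _ ≤ epsTilde ε d τ / (6 * (d : ℝ) ^ 2) * (d : ℝ) ^ 2 := by gcongr
    _ = epsTilde ε d τ / 6 := by field_simp
    _ ≤ (ε / 4) ^ 2 := by nlinarith

lemma div_sqrt_ceil_div_le (hε : ε ∈ Ioc 0 1) (hd : 0 < d) (hτ : τ ∈ Ico 0 1) :
    (d : ℝ) / √⌈8 * (d : ℝ) ^ 4 / epsTilde ε d τ ^ 4⌉₊ / (1 - τ) ≤ ε / 4 := by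
  have hσ : 0 < 1 - τ := sub_pos.2 hτ.2
  have hd' : (1 : ℝ) ≤ d := by exact_mod_cast hd
  have hpos := epsTilde_pos hε.1 hd hτ.2
  have hle := epsTilde_le hε hd hτ
  have hsq : (1 - τ) * ε ^ 2 ≤ (1 - τ) * ε := by
    gcongr
    exact pow_le_of_le_one hε.1.le hε.2 two_ne_zero
  have hle1 : epsTilde ε d τ ≤ 1 := by nlinarith [hε.1, hε.2, hτ.1]
  have hsqrt : (d : ℝ) ^ 2 / epsTilde ε d τ ^ 2 ≤ √⌈8 * (d : ℝ) ^ 4 / epsTilde ε d τ ^ 4⌉₊ := by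
    refine Real.le_sqrt_of_sq_le (le_trans ?_ (Nat.le_ceil _))
    calc ((d : ℝ) ^ 2 / epsTilde ε d τ ^ 2) ^ 2 = (d : ℝ) ^ 4 / epsTilde ε d τ ^ 4 := by ring
      _ ≤ 8 * (d : ℝ) ^ 4 / epsTilde ε d τ ^ 4 := by
        gcongr
        exact le_mul_of_one_le_left (by positivity) (by norm_num)
  rw [div_le_iff₀ hσ]
  calc (d : ℝ) / √⌈8 * (d : ℝ) ^ 4 / epsTilde ε d τ ^ 4⌉₊
      ≤ d / ((d : ℝ) ^ 2 / epsTilde ε d τ ^ 2) := by gcongr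
    _ = epsTilde ε d τ ^ 2 / d := by field_simp
    _ ≤ epsTilde ε d τ ^ 2 := div_le_self (sq_nonneg _) hd'
    _ ≤ epsTilde ε d τ := pow_le_of_le_one hpos.le hle1 two_ne_zero
    _ ≤ ε / 4 * (1 - τ) := by linarith

lemma fM0_le_fXi (hε : ε ∈ Ioc 0 1) (hd : 0 < d) (hτ : τ ∈ Ico 0 1) (g χ h : ℕ → ℕ) (n : ℕ) :
    fM0 h (fM0 (gTil g) (χ (d * n))) ≤ fXi ε τ g χ h d n := by
  obtain ⟨hε0, hε1⟩ := hε
  have hσ : 0 < 1 - τ := sub_pos.2 hτ.2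
  have hd' : (1 : ℝ) ≤ d := by exact_mod_cast hd
  have hdenom : (1 - τ) * (ε / 2) ^ 2 ≤ 6 * d := by nlinarith [hτ.1, sq_nonneg (ε / 2)]
  rw [← Nat.cast_le (α := ℝ)]
  refine le_trans ?_ (Nat.le_ceil _)
  rw [le_div_iff₀ (by positivity), mul_comm]
  gcongr

lemma iterate_ftilde_one_le_KXi (hd : 0 < d) (g χ h : ℕ → ℕ) {s : ℕ}
    (hs : s ≤ ⌈8 * (d : ℝ) ^ 4 / epsTilde ε d τ ^ 4⌉₊ ^
      max (sInf {i : ℕ | τ ^ (i + 1) ≤ epsTilde ε d τ / (6 * (d : ℝ) ^ 2)}) 1) :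
    (ftilde d (fXi ε τ g χ h d))^[s] 1 ≤ KXi ε g χ h d τ :=
  (iterate_ftilde_mono hd _ 1 hs).trans (iterate_ftilde_one_le_kSeq hd _ _ _)

lemma fM0_le_iterate_ftilde_succ (hε : ε ∈ Ioc 0 1) (hd : 0 < d) (hτ : τ ∈ Ico 0 1)
    (g χ h : ℕ → ℕ) (s : ℕ) :
    fM0 h (fM0 (gTil g) (χ (d * (ftilde d (fXi ε τ g χ h d))^[s] 1))) ≤
      (ftilde d (fXi ε τ g χ h d))^[s + 1] 1 := by
  rw [Function.iterate_succ_apply']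
  exact (fM0_le_fXi hε hd hτ g χ h _).trans (apply_le_ftilde hd _ (le_iterate_ftilde hd _ s 1))

lemma mem_Icc_one_div_of_mem_window {lam : ℕ → ℝ} {g χ h : ℕ → ℕ} (hh : ∀ n, 1 ≤ h n)
    (hlamh : ∀ n, 1 / (h n : ℝ) ≤ lam n) (hχ : ∀ n : ℕ, ∀ i ≥ χ n, lam i ≤ 1 / ((n : ℝ) + 1))
    (hd : 0 < d) {k K L n i : ℕ} (hk : 1 ≤ k) (hkK : k ≤ K)
    (hL : fM0 h (fM0 (gTil g) (χ (d * k))) ≤ L) (hn : n = min (χ (d * k)) (χ (d * K)))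
    (hi : i ∈ Icc n (gTil g n)) : lam i ∈ Icc (1 / (L : ℝ)) (1 / (k : ℝ)) := by
  subst hn
  constructor
  · have hhL : h i ≤ L := (le_fM0 h (hi.2.trans (le_fM0 _ (min_le_left _ _)))).trans hL
    refine le_trans (one_div_le_one_div_of_le ?_ ?_) (hlamh i)
    · exact_mod_cast hh i
    · exact_mod_cast hhL
  · obtain ⟨q, hkq, hqi⟩ : ∃ q, k ≤ q ∧ χ (d * q) ≤ i :=
      (min_le_iff.1 hi.1).elim (fun h ↦ ⟨k, le_rfl, h⟩) fun h ↦ ⟨K, hkK, h⟩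
    have hkdq : k ≤ d * q + 1 := (hkq.trans (Nat.le_mul_of_pos_left q hd)).trans (Nat.le_succ _)
    refine (hχ _ i hqi).trans (one_div_le_one_div_of_le (by exact_mod_cast hk) ?_)
    exact_mod_cast hkdq

end Parameters

theorem resolvent_rate_of_metastability_general
    {H : Type*} [NormedAddCommGroup H] [InnerProductSpace ℝ H]
    (d : ℕ) (hd : 1 ≤ d) (C : Set H) (hcv : Convex ℝ C)
    (hbd : ∀ x ∈ C, ∀ y ∈ C, ‖x - y‖ ≤ (d : ℝ))
    (T : H → H) (hTm : MapsTo T C C) (hT : ∀ x ∈ C, ∀ y ∈ C, ‖T x - T y‖ ≤ ‖x - y‖)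
    (τ : ℝ) (hτ0 : 0 ≤ τ) (hτ1 : τ < 1)
    (G : H → H) (hGm : MapsTo G C C) (hG : ∀ x ∈ C, ∀ y ∈ C, ‖G x - G y‖ ≤ τ * ‖x - y‖)
    (lam : ℕ → ℝ) (hlam : ∀ n, lam n ∈ Ioc (0 : ℝ) 1)
    (h : ℕ → ℕ) (hh : ∀ n, 1 ≤ h n) (hlamh : ∀ n, 1 / (h n : ℝ) ≤ lam n)
    (χ : ℕ → ℕ) (hχ : ∀ n : ℕ, ∀ i ≥ χ n, lam i ≤ 1 / ((n : ℝ) + 1))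
    (v : ℕ → H) (hvC : ∀ n, v n ∈ C)
    (hv : ∀ n, v n = (1 - lam n) • T (v n) + lam n • G (T (v n)))
    (ε : ℝ) (hε : ε ∈ Ioc (0 : ℝ) 1) (g : ℕ → ℕ) :
    ∃ n ≤ XiDef ε g χ h d τ,
      ∀ i ∈ Icc n (gTil g n), ∀ j ∈ Icc n (gTil g n), ‖v i - v j‖ ≤ ε := by
  lift τ to ℝ≥0 using hτ0
  have hτ : (τ : ℝ) ∈ Ico 0 1 := ⟨τ.2, hτ1⟩
  have hεt := epsTilde_pos hε.1 hd hτ1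
  have hTlip : LipschitzOnWith 1 T C := .of_dist_le_mul fun x hx y hy ↦ by
    simpa [dist_eq_norm] using hT x hx y hy
  have hGlip : LipschitzOnWith τ G C := .of_dist_le_mul fun x hx y hy ↦ by
    simpa [dist_eq_norm] using hG x hx y hy
  have hGTlip : LipschitzOnWith τ (G ∘ T) C := by simpa using hGlip.comp hTlip hTm
  let f := fXi ε τ g χ h d
  let N := ⌈8 * (d : ℝ) ^ 4 / epsTilde ε d τ ^ 4⌉₊
  let i₀ := sInf {i : ℕ | (τ : ℝ) ^ (i + 1) ≤ epsTilde ε d τ / (6 * (d : ℝ) ^ 2)}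
  obtain ⟨s, hs, hblock⟩ := exists_block_norm_sub_le ⟨v 0, hvC 0⟩ hcv hbd hTlip hTm hGTlip
    (hGm.comp hTm) hτ1 hlam hvC hv (Nat.ceil_pos.2 (by positivity) : 0 < N)
    (one_div_iterate_ftilde_mem_Ioc hd f) (antitone_one_div_iterate_ftilde hd f) (max i₀ 1)
  let k := (ftilde d f)^[s] 1
  -- `χ` need not be monotone, so `χ (d * k)` itself may exceed the bound `Ξ`.
  obtain ⟨n, hn⟩ : ∃ n, n = min (χ (d * k)) (χ (d * KXi ε g χ h d τ)) := ⟨_, rfl⟩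
  have hwindow {i : ℕ} := mem_Icc_one_div_of_mem_window (g := g) (i := i) hh hlamh hχ hd
    (le_iterate_ftilde hd f s 1) (iterate_ftilde_one_le_KXi hd g χ h hs.le)
    (fM0_le_iterate_ftilde_succ hε hd hτ g χ h s) hn
  refine ⟨n, hn.trans_le (min_le_right _ _), fun i hi j hj ↦
    (hblock i j (hwindow hi) (hwindow hj)).trans ?_⟩
  have hpow := pow_max_one_mul_le hε hd hτ (pow_sInf_succ_le (by positivity) hτ)
  have hsqrt := div_sqrt_ceil_div_le hε hd hτ
  linarith

/-- `Ξ(ε/2, m ↦ m + g(m), χ, h, d, τ)` is a rate of metastability for the resolvent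
sequence `v_n = (1−λ_n)·T(v_n) + λ_n·G(T(v_n))`. -/
theorem resolvent_rate_of_metastability
    {H : Type*} [NormedAddCommGroup H] [InnerProductSpace ℝ H] [CompleteSpace H]
    (d : ℕ) (hd : 1 ≤ d)
    (C : Set H) (hne : C.Nonempty) (hcl : IsClosed C) (hcv : Convex ℝ C)
    (hbd : ∀ x ∈ C, ∀ y ∈ C, ‖x - y‖ ≤ (d : ℝ))
    (T : H → H) (hTm : Set.MapsTo T C C)
    (hT : ∀ x ∈ C, ∀ y ∈ C, ‖T x - T y‖ ≤ ‖x - y‖)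
    (hfix : ∃ p ∈ C, T p = p)
    (τ : ℝ) (hτ0 : 0 ≤ τ) (hτ1 : τ < 1)
    (G : H → H) (hGm : Set.MapsTo G C C)
    (hG : ∀ x ∈ C, ∀ y ∈ C, ‖G x - G y‖ ≤ τ * ‖x - y‖)
    (lam : ℕ → ℝ) (hlam : ∀ n, lam n ∈ Set.Ioc (0 : ℝ) 1)
    (h : ℕ → ℕ) (hh : ∀ n, 1 ≤ h n) (hlamh : ∀ n, 1 / (h n : ℝ) ≤ lam n)
    (χ : ℕ → ℕ) (hχ : ∀ n : ℕ, ∀ i ≥ χ n, lam i ≤ 1 / ((n : ℝ) + 1))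
    (v : ℕ → H) (hvC : ∀ n, v n ∈ C)
    (hv : ∀ n, v n = (1 - lam n) • T (v n) + lam n • G (T (v n)))
    (ε : ℝ) (hε : ε ∈ Set.Ioc (0 : ℝ) 1) (g : ℕ → ℕ) :
    ∃ n ≤ XiDef (ε / 2) (fun m => m + g m) χ h d τ,
      ∀ i ∈ Set.Icc n (n + g n), ∀ j ∈ Set.Icc n (n + g n), ‖v i - v j‖ ≤ ε := by
  have hε' : ε / 2 ∈ Ioc (0 : ℝ) 1 := ⟨half_pos hε.1, by linarith [hε.1, hε.2]⟩
  obtain ⟨n, hn, hmeta⟩ := resolvent_rate_of_metastability_general d hd C hcv hbd T hTm hT τ hτ0 hτ1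
    G hGm hG lam hlam h hh hlamh χ hχ v hvC hv (ε / 2) hε' fun m ↦ m + g m
  exact ⟨n, hn, fun i hi j hj ↦ (hmeta i ⟨hi.1, hi.2.trans (le_max_right _ _)⟩ j
    ⟨hj.1, hj.2.trans (le_max_right _ _)⟩).trans (half_le_self hε.1.le)⟩
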